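/- For any program Ω with weight constraints, a consistent set Z of literals is an answer set for Ω if and only if Z is an answer set for the nondisjunctive translation [Ω]^{nd}. -/

import Mathlib

open Classical

/-- A literal: a propositional atom `a` or its classical negation `¬ a`. -/
inductive Lit (α : Type) where
  | pos : α → Lit α
  | neg : α → Lit α

/-- The atom of a literal. -/
def Lit.atom {α : Type} : Lit α → α
  | .pos a => a
  | .neg a => a

/-- Mapping literals along a map of atoms. -/
def Lit.map {α β : Type} (f : α → β) : Lit α → Lit β
  | .pos a => .pos (f a)
  | .neg a => .neg (f a)

/-- A set of literals is consistent if it contains no pair `a`, `¬ a`. -/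
def LitConsistent {α : Type} (Z : Set (Lit α)) : Prop :=
  ∀ a : α, ¬(Lit.pos a ∈ Z ∧ Lit.neg a ∈ Z)

/-- Formulas (nested expressions): elementary formulas are literals, `⊥` and `⊤`;
formulas are built from them using negation as failure `naf`, conjunction `conj`
and disjunction `disj`. -/
inductive Formula (α : Type) where
  | lit : Lit α → Formula α
  | fbot : Formula α
  | ftop : Formula α
  | naf : Formula α → Formula α
  | conj : Formula α → Formula α → Formula α
  | disj : Formula α → Formula α → Formula α

/-- Satisfaction of a formula by a set of literals. -/
def Formula.sat {α : Type} (Z : Set (Lit α)) : Formula α → Prop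
  | .lit l => l ∈ Z
  | .fbot => False
  | .ftop => True
  | .naf F => ¬ F.sat Z
  | .conj F G => F.sat Z ∧ G.sat Z
  | .disj F G => F.sat Z ∨ G.sat Z

/-- A rule with nested expressions: `head ← body`. -/
structure NRule (α : Type) where
  head : Formula α
  body : Formula α

/-- `Z` satisfies a program (a set of rules). -/
def progSat {α : Type} (Z : Set (Lit α)) (P : Set (NRule α)) : Prop :=
  ∀ r ∈ P, r.body.sat Z → r.head.sat Z

/-- The reduct `F^Z` of a formula relative to a set of literals `Z`. -/
noncomputable def Formula.reduct {α : Type} (Z : Set (Lit α)) : Formula α → Formula α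
  | .lit l => .lit l
  | .fbot => .fbot
  | .ftop => .ftop
  | .naf F => if F.sat Z then .fbot else .ftop
  | .conj F G => .conj (F.reduct Z) (G.reduct Z)
  | .disj F G => .disj (F.reduct Z) (G.reduct Z)

/-- The reduct `Π^Z` of a program. -/
noncomputable def progReduct {α : Type} (Z : Set (Lit α)) (P : Set (NRule α)) : Set (NRule α) :=
  (fun r : NRule α => NRule.mk (r.head.reduct Z) (r.body.reduct Z)) '' P

/-- `Z` is minimal (under inclusion) among the consistent sets of literals satisfying `P`. -/
def MinimalSat {α : Type} (Z : Set (Lit α)) (P : Set (NRule α)) : Prop :=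
  LitConsistent Z ∧ progSat Z P ∧
    ∀ Z' : Set (Lit α), LitConsistent Z' → progSat Z' P → Z' ⊆ Z → Z' = Z

/-- `Z` is an answer set for a program `P` with nested expressions:
`Z` is minimal among the consistent sets satisfying the reduct `P^Z`. -/
def AnswerSet {α : Type} (Z : Set (Lit α)) (P : Set (NRule α)) : Prop :=
  MinimalSat Z (progReduct Z P)

/-- Strong equivalence of programs with nested expressions. -/
def StrongEq {α : Type} (P₁ P₂ : Set (NRule α)) : Prop :=
  ∀ P : Set (NRule α), ∀ Z : Set (Lit α), AnswerSet Z (P₁ ∪ P) ↔ AnswerSet Z (P₂ ∪ P)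

/-- Multiple conjunction (the empty conjunction is `⊤`). -/
def bigConj {α : Type} : List (Formula α) → Formula α
  | [] => .ftop
  | F :: Fs => .conj F (bigConj Fs)

/-- Multiple disjunction (the empty disjunction is `⊥`). -/
def bigDisj {α : Type} : List (Formula α) → Formula α
  | [] => .fbot
  | F :: Fs => .disj F (bigDisj Fs)

/-- `⟨F₁,…,F_n⟩:X`: the disjunction over `I ∈ X` of the conjunctions of the `Fᵢ`, `i ∈ I`. -/
noncomputable def angled {α : Type} {n : ℕ} (F : Fin n → Formula α) (X : Finset (Finset (Fin n))) :
    Formula α :=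
  bigDisj (X.toList.map fun I => bigConj (I.toList.map F))
/-- A rule element: a literal (positive rule element) or a literal
prefixed with negation as failure (negative rule element). -/
inductive RElem (α : Type) where
  | pos : Lit α → RElem α
  | neg : Lit α → RElem α

/-- Satisfaction of a rule element by a set of literals. -/
def RElem.sat {α : Type} (Z : Set (Lit α)) : RElem α → Prop
  | .pos l => l ∈ Z
  | .neg l => l ∉ Z

/-- Whether a rule element is negative. -/
def RElem.isNegB {α : Type} : RElem α → Bool
  | .pos _ => false
  | .neg _ => true

/-- The sum of the weights of the entries of `S` that are satisfied by `Z`. -/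
noncomputable def weightSum {α : Type} (Z : Set (Lit α)) (S : List (RElem α × ℝ)) : ℝ :=
  (S.map fun p => if p.1.sat Z then p.2 else 0).sum

/-- A weight constraint `L ≤ {c₁=w₁,…,c_m=w_m} ≤ U` with nonnegative weights;
`L` and `U` may be `−∞`/`+∞`. -/
structure WConstraint (α : Type) where
  L : EReal
  S : List (RElem α × ℝ)
  U : EReal
  nonneg : ∀ p ∈ S, (0 : ℝ) ≤ p.2

/-- `Z` satisfies the weight constraint `L ≤ S ≤ U`. -/
def WConstraint.sat {α : Type} (Z : Set (Lit α)) (C : WConstraint α) : Prop :=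
  C.L ≤ (weightSum Z C.S : EReal) ∧ (weightSum Z C.S : EReal) ≤ C.U

/-- A rule with weight constraints, `C₀ ← C₁,…,C_n`. -/
structure WRule (α : Type) where
  head : WConstraint α
  body : List (WConstraint α)

/-- `Z` satisfies a program with weight constraints. -/
def wProgSat {α : Type} (Z : Set (Lit α)) (Ω : Set (WRule α)) : Prop :=
  ∀ R ∈ Ω, (∀ C ∈ R.body, C.sat Z) → R.head.sat Z

/-- A weight constraint of the form `L ≤ S` (no upper bound), with nonnegative weights. -/
structure LConstraint (α : Type) where
  L : EReal
  S : List (RElem α × ℝ)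
  nonneg : ∀ p ∈ S, (0 : ℝ) ≤ p.2

/-- Satisfaction of a lower-bound constraint (by an arbitrary set of literals). -/
def LConstraint.sat {α : Type} (Z : Set (Lit α)) (C : LConstraint α) : Prop :=
  C.L ≤ (weightSum Z C.S : EReal)

/-- A Horn rule: a literal as head, lower-bound constraints as body. -/
structure HornRule (α : Type) where
  head : Lit α
  body : List (LConstraint α)

/-- Satisfaction of a set of Horn rules by an arbitrary set of literals. -/
def hornSat {α : Type} (Z : Set (Lit α)) (P : Set (HornRule α)) : Prop :=
  ∀ r ∈ P, (∀ C ∈ r.body, C.sat Z) → r.head ∈ Z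

/-- The deductive closure of a set of Horn rules: its unique minimal satisfying
set of literals (the intersection of all satisfying sets). -/
def cl {α : Type} (P : Set (HornRule α)) : Set (Lit α) :=
  ⋂₀ {Z : Set (Lit α) | hornSat Z P}

/-- The sum of the weights of the negative entries of `S` satisfied by `Z`. -/
noncomputable def negSatWeight {α : Type} (Z : Set (Lit α)) (S : List (RElem α × ℝ)) : ℝ :=
  (S.map fun p => if p.1.isNegB = true ∧ p.1.sat Z then p.2 else 0).sum

/-- The reduct `(L ≤ S)^Z` of a lower-bound constraint: drop the negative entries
of `S` and decrease `L` by the total weight of the negative entries satisfied by `Z`. -/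
noncomputable def LConstraint.reduct {α : Type} (Z : Set (Lit α)) (C : LConstraint α) :
    LConstraint α :=
  ⟨C.L - ((negSatWeight Z C.S : ℝ) : EReal),
   C.S.filter (fun p => !p.1.isNegB),
   fun p hp => C.nonneg p (List.mem_of_mem_filter hp)⟩

/-- The lower-bound part `L ≤ S` of a weight constraint `L ≤ S ≤ U`. -/
def WConstraint.lower {α : Type} (C : WConstraint α) : LConstraint α :=
  ⟨C.L, C.S, C.nonneg⟩

/-- The positive rule elements (as literals) occurring in `S`. -/
def posElems {α : Type} (S : List (RElem α × ℝ)) : Set (Lit α) :=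
  {l : Lit α | ∃ w : ℝ, (RElem.pos l, w) ∈ S}

/-- The reduct `Ω^Z` of a program with weight constraints: for each rule
`L₀≤S₀≤U₀ ← C₁,…,C_n` whose upper bounds are all satisfied by `Z`, the Horn rules
`l ← C₁^Z,…,C_n^Z` for all positive rule elements `l` of `S₀` with `l ∈ Z`. -/
noncomputable def wProgReduct {α : Type} (Z : Set (Lit α)) (Ω : Set (WRule α)) :
    Set (HornRule α) :=
  { r : HornRule α | ∃ R ∈ Ω,
      (∀ C ∈ R.body, (weightSum Z C.S : EReal) ≤ C.U) ∧
      r.head ∈ posElems R.head.S ∧ r.head ∈ Z ∧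
      r.body = R.body.map (fun C => C.lower.reduct Z) }

/-- `Z` is an answer set for the program `Ω` with weight constraints. -/
def WAnswerSet {α : Type} (Z : Set (Lit α)) (Ω : Set (WRule α)) : Prop :=
  LitConsistent Z ∧ wProgSat Z Ω ∧ cl (wProgReduct Z Ω) = Z

/-- Strong equivalence of programs with weight constraints. -/
def WStrongEq {α : Type} (Ω₁ Ω₂ : Set (WRule α)) : Prop :=
  ∀ Ω : Set (WRule α), ∀ Z : Set (Lit α), WAnswerSet Z (Ω₁ ∪ Ω) ↔ WAnswerSet Z (Ω₂ ∪ Ω)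

/-- A rule element as a formula: `l` becomes the literal `l`, `not l` becomes `naf l`. -/
def RElem.toFormula {α : Type} : RElem α → Formula α
  | .pos l => .lit l
  | .neg l => .naf (.lit l)

/-- The translation `[L ≤ S]`: the formula `⟨c₁,…,c_m⟩:{I : L ≤ Σ_{i∈I} wᵢ}`. -/
noncomputable def trLower {α : Type} (L : EReal) (S : List (RElem α × ℝ)) : Formula α :=
  angled (fun i : Fin S.length => (S.get i).1.toFormula)
    (Finset.univ.filter fun I : Finset (Fin S.length) =>
      L ≤ ((∑ i ∈ I, (S.get i).2 : ℝ) : EReal))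

/-- The translation `[S ≤ U]`: the formula `not ⟨c₁,…,c_m⟩:{I : U < Σ_{i∈I} wᵢ}`. -/
noncomputable def trUpper {α : Type} (S : List (RElem α × ℝ)) (U : EReal) : Formula α :=
  .naf (angled (fun i : Fin S.length => (S.get i).1.toFormula)
    (Finset.univ.filter fun I : Finset (Fin S.length) =>
      U < ((∑ i ∈ I, (S.get i).2 : ℝ) : EReal)))

/-- The translation `[L ≤ S ≤ U] = [L ≤ S],[S ≤ U]`. -/
noncomputable def trWC {α : Type} (C : WConstraint α) : Formula α :=
  .conj (trLower C.L C.S) (trUpper C.S C.U)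

/-- The formulas `l ; not l` for the positive rule elements `l` of `S`, in order. -/
def choiceFmls {α : Type} (S : List (RElem α × ℝ)) : List (Formula α) :=
  S.filterMap fun p =>
    match p.1 with
    | RElem.pos l => some (Formula.disj (.lit l) (.naf (.lit l)))
    | RElem.neg _ => none

/-- The translation of a rule with weight constraints `C₀ ← C₁,…,C_n`:
`(l₁; not l₁),…,(l_p; not l_p),[C₀] ← [C₁],…,[C_n]`. -/
noncomputable def trRule {α : Type} (R : WRule α) : NRule α :=
  ⟨bigConj (choiceFmls R.head.S ++ [trWC R.head]), bigConj (R.body.map trWC)⟩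

/-- The translation `[Ω]` of a program with weight constraints. -/
noncomputable def trProg {α : Type} (Ω : Set (WRule α)) : Set (NRule α) :=
  trRule '' Ω

/-- The nondisjunctive translation `[Ω]^{nd}`: each rule `C₀ ← C₁,…,C_n` is replaced
by the rules `l ← not not l, [C₁],…,[C_n]` for all positive rule elements `l` of `C₀`
together with `⊥ ← not [C₀], [C₁],…,[C_n]`. -/
noncomputable def ndTrans {α : Type} (Ω : Set (WRule α)) : Set (NRule α) :=
  { r : NRule α | ∃ R ∈ Ω,
      (∃ l ∈ posElems R.head.S,
        r = ⟨.lit l, bigConj (.naf (.naf (.lit l)) :: R.body.map trWC)⟩) ∨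
      r = ⟨.fbot, bigConj (.naf (trWC R.head) :: R.body.map trWC)⟩ }

/-- Satisfaction by `Z'` of the reduct of a rule element relative to `Z`. -/
def esat {α : Type} (Z Z' : Set (Lit α)) : RElem α → Prop
  | .pos l => l ∈ Z'
  | .neg l => l ∉ Z

/-- Weight sum with respect to `esat`. -/
noncomputable def esum {α : Type} (Z Z' : Set (Lit α)) (S : List (RElem α × ℝ)) : ℝ :=
  (S.map fun p => if esat Z Z' p.1 then p.2 else 0).sum

theorem esat_self {α : Type} (Z : Set (Lit α)) (c : RElem α) : esat Z Z c ↔ c.sat Z := by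
  cases c <;> rfl

theorem esum_self {α : Type} (Z : Set (Lit α)) (S : List (RElem α × ℝ)) :
    esum Z Z S = weightSum Z S := by
  simp only [esum, weightSum, esat_self]

theorem esum_mono {α : Type} (Z : Set (Lit α)) {X Y : Set (Lit α)} (h : X ⊆ Y)
    (S : List (RElem α × ℝ)) (hS : ∀ p ∈ S, (0 : ℝ) ≤ p.2) : esum Z X S ≤ esum Z Y S := by
  unfold esum
  apply List.sum_le_sum
  rintro ⟨c, w⟩ hp
  have hw := hS _ hp
  cases c with
  | pos l =>
    simp only [esat]
    by_cases h1 : l ∈ X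
    · simp [h1, h h1]
    · by_cases h2 : l ∈ Y <;> simp_all
  | neg l => by_cases h1 : l ∈ Z <;> simp [esat, h1]

theorem esum_split {α : Type} (Z X : Set (Lit α)) (S : List (RElem α × ℝ)) :
    esum Z X S = weightSum X (S.filter (fun p => !p.1.isNegB)) + negSatWeight Z S := by
  induction S with
  | nil => simp [esum, weightSum, negSatWeight]
  | cons p S ih =>
    obtain ⟨c, w⟩ := p
    cases c with
    | pos l =>
      have e1 : esum Z X ((RElem.pos l, w) :: S) = (if l ∈ X then w else 0) + esum Z X S := by
        by_cases h : l ∈ X <;> simp [esum, esat, h]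
      have e2 : weightSum X (((RElem.pos l, w) :: S).filter (fun p => !p.1.isNegB)) =
          (if l ∈ X then w else 0) + weightSum X (S.filter (fun p => !p.1.isNegB)) := by
        by_cases h : l ∈ X <;> simp [weightSum, RElem.sat, RElem.isNegB, h]
      have e3 : negSatWeight Z ((RElem.pos l, w) :: S) = negSatWeight Z S := by
        simp [negSatWeight, RElem.isNegB]
      rw [e1, e2, e3, ih]; ring
    | neg l =>
      have e1 : esum Z X ((RElem.neg l, w) :: S) = (if l ∈ Z then 0 else w) + esum Z X S := by
        by_cases h : l ∈ Z <;> simp [esum, esat, h]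
      have e2 : weightSum X (((RElem.neg l, w) :: S).filter (fun p => !p.1.isNegB)) =
          weightSum X (S.filter (fun p => !p.1.isNegB)) := by
        simp [RElem.isNegB]
      have e3 : negSatWeight Z ((RElem.neg l, w) :: S) =
          (if l ∈ Z then 0 else w) + negSatWeight Z S := by
        by_cases h : l ∈ Z <;> simp [negSatWeight, RElem.isNegB, RElem.sat, h]
      rw [e1, e2, e3, ih]; ring

theorem reduct_sat_self {α : Type} (Z : Set (Lit α)) (F : Formula α) :
    (F.reduct Z).sat Z ↔ F.sat Z := by
  induction F with
  | naf F ih => by_cases h : F.sat Z <;> simp [Formula.reduct, Formula.sat, h]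
  | _ => simp_all [Formula.reduct, Formula.sat]

theorem bigConj_rsat {α : Type} (Z X : Set (Lit α)) (Fs : List (Formula α)) :
    ((bigConj Fs).reduct Z).sat X ↔ ∀ F ∈ Fs, (F.reduct Z).sat X := by
  induction Fs <;> simp_all [bigConj, Formula.reduct, Formula.sat]

theorem bigDisj_rsat {α : Type} (Z X : Set (Lit α)) (Fs : List (Formula α)) :
    ((bigDisj Fs).reduct Z).sat X ↔ ∃ F ∈ Fs, (F.reduct Z).sat X := by
  induction Fs <;> simp_all [bigDisj, Formula.reduct, Formula.sat]

theorem toFormula_rsat {α : Type} (Z X : Set (Lit α)) (c : RElem α) :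
    (c.toFormula.reduct Z).sat X ↔ esat Z X c := by
  cases c with
  | pos l => simp [RElem.toFormula, Formula.reduct, Formula.sat, esat]
  | neg l =>
    by_cases h : l ∈ Z <;> simp [RElem.toFormula, Formula.reduct, Formula.sat, esat, h]

theorem angled_rsat {α : Type} (Z X : Set (Lit α)) (S : List (RElem α × ℝ))
    (hS : ∀ p ∈ S, (0 : ℝ) ≤ p.2) (P : ℝ → Prop) (hP : ∀ a b, a ≤ b → P a → P b)
    [DecidablePred fun I : Finset (Fin S.length) => P (∑ i ∈ I, (S.get i).2)] :
    ((angled (fun i : Fin S.length => (S.get i).1.toFormula)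
      (Finset.univ.filter fun I : Finset (Fin S.length) =>
        P (∑ i ∈ I, (S.get i).2))).reduct Z).sat X ↔ P (esum Z X S) := by
  have key : esum Z X S =
      ∑ i ∈ Finset.univ.filter (fun i : Fin S.length => esat Z X (S.get i).1), (S.get i).2 := by
    rw [Finset.sum_filter, esum, ← List.sum_ofFn]
    congr 1
    apply List.ext_get <;> simp
  simp only [angled, bigDisj_rsat, List.mem_map, Finset.mem_toList, Finset.mem_filter,
    Finset.mem_univ, true_and, exists_exists_and_eq_and, bigConj_rsat,
    forall_exists_index, and_imp, forall_apply_eq_imp_iff₂, toFormula_rsat]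
  constructor
  · rintro ⟨I, hI, h⟩
    refine hP _ _ ?_ hI
    rw [key]
    apply Finset.sum_le_sum_of_subset_of_nonneg
    · intro i hi
      simpa using h i hi
    · intro i _ _
      exact hS _ (List.get_mem _ _)
  · intro h
    refine ⟨_, key ▸ h, ?_⟩
    intro i hi
    simpa using hi

theorem trLower_rsat {α : Type} (Z X : Set (Lit α)) (L : EReal) (S : List (RElem α × ℝ))
    (hS : ∀ p ∈ S, (0 : ℝ) ≤ p.2) :
    ((trLower L S).reduct Z).sat X ↔ L ≤ ((esum Z X S : ℝ) : EReal) :=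
  by
  unfold trLower
  exact angled_rsat Z X S hS (fun a => L ≤ (a : EReal))
    (fun _ _ h1 h2 => h2.trans (EReal.coe_le_coe_iff.2 h1))

theorem trUpper_rsat {α : Type} (Z X : Set (Lit α)) (U : EReal) (S : List (RElem α × ℝ))
    (hS : ∀ p ∈ S, (0 : ℝ) ≤ p.2) :
    ((trUpper S U).reduct Z).sat X ↔ ((weightSum Z S : ℝ) : EReal) ≤ U := by
  have h : ((angled (fun i : Fin S.length => (S.get i).1.toFormula)
    (Finset.univ.filter fun I : Finset (Fin S.length) =>
      U < ((∑ i ∈ I, (S.get i).2 : ℝ) : EReal))).reduct Z).sat Z ↔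
      U < ((esum Z Z S : ℝ) : EReal) := angled_rsat Z Z S hS (fun a => U < (a : EReal))
    (fun _ _ h1 h2 => h2.trans_le (EReal.coe_le_coe_iff.2 h1))
  rw [reduct_sat_self, esum_self] at h
  unfold trUpper Formula.reduct
  split_ifs with h1
  · simpa [Formula.sat] using h.1 h1
  · simpa [Formula.sat] using fun h2 => h1 (h.2 h2)

theorem trWC_rsat {α : Type} (Z X : Set (Lit α)) (C : WConstraint α) :
    ((trWC C).reduct Z).sat X ↔
      C.L ≤ ((esum Z X C.S : ℝ) : EReal) ∧ ((weightSum Z C.S : ℝ) : EReal) ≤ C.U := by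
  rw [← trLower_rsat Z X C.L C.S C.nonneg, ← trUpper_rsat Z X C.U C.S C.nonneg]
  rfl

theorem trWC_sat {α : Type} (Z : Set (Lit α)) (C : WConstraint α) :
    (trWC C).sat Z ↔ C.sat Z := by
  rw [← reduct_sat_self, trWC_rsat, esum_self]; rfl

theorem lower_reduct_sat {α : Type} (Z X : Set (Lit α)) (C : WConstraint α) :
    (C.lower.reduct Z).sat X ↔ C.L ≤ ((esum Z X C.S : ℝ) : EReal) := by
  rw [esum_split, EReal.coe_add]
  exact EReal.sub_le_iff_le_add (Or.inl (EReal.coe_ne_bot _)) (Or.inl (EReal.coe_ne_top _))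

theorem horn_iff {α : Type} (Z X : Set (Lit α)) (Ω : Set (WRule α)) :
    hornSat X (wProgReduct Z Ω) ↔ ∀ R ∈ Ω, ∀ l ∈ posElems R.head.S, l ∈ Z →
      (∀ C ∈ R.body, ((trWC C).reduct Z).sat X) → l ∈ X := by
  simp only [trWC_rsat]
  constructor
  · intro h R hR l hl hlZ hb
    refine h ⟨l, R.body.map (fun C => C.lower.reduct Z)⟩
      ⟨R, hR, fun C hC => (hb C hC).2, hl, hlZ, rfl⟩ ?_
    intro C hC
    obtain ⟨D, hD, rfl⟩ := List.mem_map.1 hC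
    exact (lower_reduct_sat Z X D).2 (hb D hD).1
  · rintro h ⟨l, b⟩ ⟨R, hR, hU, hl, hlZ, hb⟩ hs
    refine h R hR l hl hlZ fun C hC => ⟨?_, hU C hC⟩
    refine (lower_reduct_sat Z X C).1 (hs _ ?_)
    rw [hb]
    exact List.mem_map_of_mem hC

theorem nd_iff {α : Type} (Z X : Set (Lit α)) (Ω : Set (WRule α)) :
    progSat X (progReduct Z (ndTrans Ω)) ↔ hornSat X (wProgReduct Z Ω) ∧
      ∀ R ∈ Ω, (∀ C ∈ R.body, ((trWC C).reduct Z).sat X) → R.head.sat Z := by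
  have e1 : ∀ (R : WRule α) (l : Lit α),
      ((bigConj (.naf (.naf (.lit l)) :: R.body.map trWC)).reduct Z).sat X ↔
        l ∈ Z ∧ ∀ C ∈ R.body, ((trWC C).reduct Z).sat X := by
    intro R l
    rw [bigConj_rsat]
    by_cases h : l ∈ Z <;> simp [Formula.reduct, Formula.sat, h]
  have e2 : ∀ (R : WRule α),
      ((bigConj (.naf (trWC R.head) :: R.body.map trWC)).reduct Z).sat X ↔
        ¬ R.head.sat Z ∧ ∀ C ∈ R.body, ((trWC C).reduct Z).sat X := by
    intro R
    rw [bigConj_rsat, ← trWC_sat]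
    by_cases h : (trWC R.head).sat Z <;> simp [Formula.reduct, Formula.sat, h]
  rw [horn_iff]
  constructor
  · intro h
    refine ⟨fun R hR l hl hlZ hb => ?_, fun R hR hb => ?_⟩
    · exact h _ ⟨_, ⟨R, hR, Or.inl ⟨l, hl, rfl⟩⟩, rfl⟩ ((e1 R l).2 ⟨hlZ, hb⟩)
    · by_contra hn
      exact h _ ⟨_, ⟨R, hR, Or.inr rfl⟩, rfl⟩ ((e2 R).2 ⟨hn, hb⟩)
  · rintro ⟨h1, h2⟩ _ ⟨_, ⟨R, hR, ⟨l, hl, rfl⟩ | rfl⟩, rfl⟩ hb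
    · obtain ⟨hlZ, hb⟩ := (e1 R l).1 hb
      exact h1 R hR l hl hlZ hb
    · obtain ⟨hn, hb⟩ := (e2 R).1 hb
      exact hn (h2 R hR hb)

theorem trWC_mono {α : Type} (Z : Set (Lit α)) {X Y : Set (Lit α)} (h : X ⊆ Y)
    (C : WConstraint α) (hs : ((trWC C).reduct Z).sat X) : ((trWC C).reduct Z).sat Y := by
  rw [trWC_rsat] at *
  exact ⟨hs.1.trans (EReal.coe_le_coe_iff.2 (esum_mono Z h C.S C.nonneg)), hs.2⟩

theorem cl_horn {α : Type} (Z : Set (Lit α)) (Ω : Set (WRule α)) :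
    hornSat (cl (wProgReduct Z Ω)) (wProgReduct Z Ω) := by
  rw [horn_iff]
  intro R hR l hl hlZ hb Y hY
  exact (horn_iff Z Y Ω).1 hY R hR l hl hlZ
    fun C hC => trWC_mono Z (Set.sInter_subset_of_mem hY) C (hb C hC)

/-- A consistent set `Z` of literals is an answer set for a program `Ω` with weight
constraints iff `Z` is an answer set for the nondisjunctive translation `[Ω]^{nd}`. -/
theorem nd_sound (Ω : Set (WRule ℕ)) (Z : Set (Lit ℕ)) (hZ : LitConsistent Z) :
    WAnswerSet Z Ω ↔ AnswerSet Z (ndTrans Ω) := by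
  have hself : hornSat Z (wProgReduct Z Ω) := by
    rintro r ⟨R, hR, hU, hl, hlZ, hb⟩ _
    exact hlZ
  have hsub : cl (wProgReduct Z Ω) ⊆ Z := Set.sInter_subset_of_mem hself
  constructor
  · rintro ⟨_, hs, hc⟩
    refine ⟨hZ, ?_, ?_⟩
    · rw [nd_iff]
      refine ⟨hself, fun R hR hb => hs R hR fun C hC => ?_⟩
      rw [← trWC_sat, ← reduct_sat_self]
      exact hb C hC
    · intro X _ hX hXZ
      refine Set.Subset.antisymm hXZ ?_
      rw [← hc]
      exact Set.sInter_subset_of_mem ((nd_iff Z X Ω).1 hX).1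
  · rintro ⟨_, hs, hm⟩
    obtain ⟨_, hk⟩ := (nd_iff Z Z Ω).1 hs
    refine ⟨hZ, ?_, ?_⟩
    · intro R hR hb
      refine hk R hR fun C hC => ?_
      rw [reduct_sat_self, trWC_sat]
      exact hb C hC
    · refine hm _ (fun a ha => hZ a ⟨hsub ha.1, hsub ha.2⟩) ?_ hsub
      rw [nd_iff]
      exact ⟨cl_horn Z Ω, fun R hR hb =>
        hk R hR fun C hC => trWC_mono Z hsub C (hb C hC)⟩
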